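/- Let α > 0, β > 0, L = 2π/α, and M ≥ 1. Let V : ℝ → Matrix(M, M, ℂ) be continuous and L-periodic with V(x) Hermitian and positive semidefinite for every x. Suppose φ_1, …, φ_N : ℝ → ℂ^M are C² functions, L-periodic, orthonormal in L²((0, L); ℂ^M), and for each n there is λ_n > 0 such that −φ_n''(x) + α² β φ_n(x) − V(x) φ_n(x) = −λ_n φ_n(x) for all x. Then ∑_{n=1}^N λ_n ≤ (2/(3√3)) · K₁(β) · ∫_0^L Tr[V(x)^{3/2}] dx. -/

import Mathlib

open Real MeasureTheory ComplexOrder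

/-- The sharp constant `K₁(β) = sup_{λ>0} √λ · coth(π√(β+λ)) / √(β+λ)`. -/
noncomputable def K1 (β : ℝ) : ℝ :=
  ⨆ l : Set.Ioi (0 : ℝ),
    Real.sqrt l * (Real.cosh (π * Real.sqrt (β + l)) / Real.sinh (π * Real.sqrt (β + l))) /
      Real.sqrt (β + l)

/-!
Duality between Lieb-Thirring and Sobolev inequalities. A periodic `f` with values in an inner
product space satisfies `2 s |f(y)|² ≤ K₁(β) ∫ (|f'|² + (α² β + s²) |f|²)` for all `s ≥ 0`. Fix `y`
and a unit vector `e`, and apply this to `f = ∑ ⟨φ_n(y), e⟩ φ_n`; with `ρ = ∑ |⟨φ_n(y), e⟩|²`,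
orthonormality gives `∫ |f|² = ρ ≤ |f(y)|`. For an eigenvector `e` of `V(y)` with eigenvalue `v`,
the optimal `s` turns this into `v ρ ≤ 2 / (3 √3) K₁(β) v^(3/2) + ∫ |f'|² + α² β ρ`. Summing over an
eigenbasis of `V(y)` and integrating over `y`, orthonormality collapses the Gram sums `∫ |f'|²` into
the kinetic energies, so `∑ ∫ ⟨φ_n, V φ_n⟩` is at most `2 / (3 √3) K₁(β) ∫ Tr V^(3/2)` plus
`∑ (∫ |φ_n'|² + α² β)`. By the eigenvalue equation the left side is `∑ (∫ |φ_n'|² + α² β + λ_n)`.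
-/

open Matrix
open scoped InnerProductSpace

theorem K1_nonneg (β : ℝ) : 0 ≤ K1 β := by
  refine Real.iSup_nonneg fun l => ?_
  have : 0 ≤ sinh (π * √(β + l)) := sinh_nonneg_iff.2 (by positivity)
  positivity

theorem cosh_div_sinh_le_one_add_inv_sinh {s t : ℝ} (hs : 0 < s) (hst : s ≤ t) :
    cosh t / sinh t ≤ 1 + (sinh s)⁻¹ := by
  have hsinh : sinh s ≤ sinh t := sinh_le_sinh.2 hst
  have hsinh_s : 0 < sinh s := sinh_pos_iff.2 hs
  have hsinh_t : 0 < sinh t := hsinh_s.trans_le hsinh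
  have hcosh : cosh t ≤ sinh t + 1 := by
    have := cosh_sub_sinh t
    have := exp_le_one_iff.2 (neg_nonpos.2 (hs.le.trans hst))
    linarith
  calc
    cosh t / sinh t ≤ (sinh t + 1) / sinh t := by gcongr
    _ = 1 + (sinh t)⁻¹ := by field_simp
    _ ≤ 1 + (sinh s)⁻¹ := by gcongr

theorem le_K1 {β l : ℝ} (hβ : 0 < β) (hl : 0 ≤ l) :
    √l * (cosh (π * √(β + l)) / sinh (π * √(β + l))) / √(β + l) ≤ K1 β := by
  rcases hl.eq_or_lt with rfl | hl
  · simpa using K1_nonneg β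
  refine le_ciSup (f := fun l : Set.Ioi (0 : ℝ) =>
    √l * (cosh (π * √(β + l)) / sinh (π * √(β + l))) / √(β + l)) ?_ ⟨l, hl⟩
  refine ⟨1 + (sinh (π * √β))⁻¹, ?_⟩
  rintro _ ⟨⟨m, hm : 0 < m⟩, rfl⟩
  have hcoth : cosh (π * √(β + m)) / sinh (π * √(β + m)) ≤ 1 + (sinh (π * √β))⁻¹ :=
    cosh_div_sinh_le_one_add_inv_sinh (by positivity) (by gcongr; linarith)
  have hsqrt : √m ≤ √(β + m) := sqrt_le_sqrt (by linarith)
  have : 0 < sinh (π * √β) := sinh_pos_iff.2 (by positivity)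
  rw [div_le_iff₀ (by positivity), mul_comm]
  gcongr

theorem K1_pos {β : ℝ} (hβ : 0 < β) : 0 < K1 β := by
  have : 0 < sinh (π * √(β + 1)) := sinh_pos_iff.2 (by positivity)
  exact lt_of_lt_of_le (by positivity) (le_K1 hβ zero_le_one)

-- The test parameter `s = √(v / 3)` is the minimiser of the resulting bound over `s`.
theorem mul_le_rpow_add_of_forall_sq_le {K u v A : ℝ} (hK : 0 < K) (hv : 0 ≤ v)
    (h : ∀ s, 0 ≤ s → 2 * s * u ^ 2 ≤ K * (A + s ^ 2 * u)) :
    v * u ≤ 2 / (3 * √3) * K * v ^ (3 / 2 : ℝ) + A := by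
  obtain ⟨s, hs, rfl⟩ : ∃ s, 0 ≤ s ∧ v = 3 * s ^ 2 :=
    ⟨√(v / 3), sqrt_nonneg _, by rw [sq_sqrt (by positivity)]; ring⟩
  have hrpow : (3 * s ^ 2) ^ (3 / 2 : ℝ) = 3 * √3 * s ^ 3 := by
    have hsqrt : √(3 * s ^ 2) = √3 * s := by rw [sqrt_mul (by norm_num), sqrt_sq hs]
    rw [rpow_div_two_eq_sqrt _ hv, hsqrt, rpow_ofNat, mul_pow, pow_succ √3 2,
      sq_sqrt (by norm_num)]
  rw [hrpow, show 2 / (3 * √3) * K * (3 * √3 * s ^ 3) = 2 * K * s ^ 3 by field_simp]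
  have hsq : 0 ≤ s * (K * s - u) ^ 2 := by positivity
  refine le_of_mul_le_mul_left ?_ hK
  linarith [h s hs]

theorem periodic_deriv {𝕜 F : Type*} [NontriviallyNormedField 𝕜] [NormedAddCommGroup F]
    [NormedSpace 𝕜 F] {f : 𝕜 → F} {c : 𝕜} (hper : Function.Periodic f c) :
    Function.Periodic (deriv f) c := fun x => by
  rw [← deriv_comp_add_const, funext hper]

theorem hasDerivAt_real_tanh (x : ℝ) : HasDerivAt tanh (1 - tanh x ^ 2) x := by
  have hcosh := (cosh_pos x).ne'
  have hdiv := (hasDerivAt_sinh x).div (hasDerivAt_cosh x) hcosh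
  rw [show tanh = sinh / cosh from funext tanh_eq_sinh_div_cosh]
  refine hdiv.congr_deriv ?_
  simp only [Pi.div_apply]
  field_simp

section Sobolev

variable {E : Type*} [NormedAddCommGroup E] [InnerProductSpace ℝ E] {f : ℝ → E} {L : ℝ}

-- Integrate `(w ‖f‖²)' ≤ ‖f'‖² + k² ‖f‖²`, where `w = k tanh (k (x - c))` solves the Riccati
-- equation `w' + w² = k²` and `c` is the midpoint of the period.
theorem two_mul_tanh_mul_norm_sq_le_integral (hf : ContDiff ℝ 1 f) (hL : 0 ≤ L)
    (hper : Function.Periodic f L) (k y : ℝ) :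
    2 * k * tanh (k * L / 2) * ‖f y‖ ^ 2 ≤
      ∫ x in y..(y + L), (‖deriv f x‖ ^ 2 + k ^ 2 * ‖f x‖ ^ 2) := by
  have : Continuous (deriv f) := hf.continuous_deriv_one
  let w : ℝ → ℝ := fun x => k * tanh (k * (x - (y + L / 2)))
  have hw (x : ℝ) : HasDerivAt w (k ^ 2 - w x ^ 2) x := by
    have hlin : HasDerivAt (fun x => k * (x - (y + L / 2))) k x := by
      simpa using ((hasDerivAt_id x).sub_const (y + L / 2)).const_mul k
    refine (((hasDerivAt_real_tanh _).comp x hlin).const_mul k).congr_deriv ?_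
    ring
  have hwf (x : ℝ) : HasDerivAt (fun x => w x * ‖f x‖ ^ 2)
      ((k ^ 2 - w x ^ 2) * ‖f x‖ ^ 2 + w x * (2 * ⟪f x, deriv f x⟫_ℝ)) x :=
    (hw x).mul (hf.differentiable one_ne_zero x).hasDerivAt.norm_sq
  have hle (x : ℝ) : (k ^ 2 - w x ^ 2) * ‖f x‖ ^ 2 + w x * (2 * ⟪f x, deriv f x⟫_ℝ) ≤
      ‖deriv f x‖ ^ 2 + k ^ 2 * ‖f x‖ ^ 2 := by
    have hsq := norm_sub_sq_real (deriv f x) (w x • f x)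
    rw [inner_smul_right, norm_smul, mul_pow, norm_eq_abs, sq_abs, real_inner_comm] at hsq
    linarith [sq_nonneg ‖deriv f x - w x • f x‖]
  have hint := intervalIntegral.sub_le_integral_of_hasDeriv_right_of_le (by linarith : y ≤ y + L)
    (fun x _ => (hwf x).continuousAt.continuousWithinAt) (fun x _ => (hwf x).hasDerivWithinAt)
    (Continuous.integrableOn_Icc (by fun_prop)) (fun x _ => hle x)
  have hright : w (y + L) = k * tanh (k * L / 2) := by simp only [w]; ring_nf
  have hleft : w y = -(k * tanh (k * L / 2)) := by
    rw [← mul_neg, ← tanh_neg]; simp only [w]; ring_nf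
  rw [hper y, hright, hleft] at hint
  linarith

theorem two_mul_mul_norm_sq_le_K1_mul_integral {α β s : ℝ} (hα : 0 < α) (hβ : 0 < β)
    (hL : L = 2 * π / α) (hf : ContDiff ℝ 1 f) (hper : Function.Periodic f L) (hs : 0 ≤ s) (y : ℝ) :
    2 * s * ‖f y‖ ^ 2 ≤
      K1 β * ∫ x in (0 : ℝ)..L, (‖deriv f x‖ ^ 2 + (α ^ 2 * β + s ^ 2) * ‖f x‖ ^ 2) := by
  have hL0 : 0 ≤ L := by rw [hL]; positivity
  set r := √(β + (s / α) ^ 2) with hr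
  have hr0 : 0 < r := by positivity
  have hr_sq : r ^ 2 = β + (s / α) ^ 2 := sq_sqrt (by positivity)
  have hK := le_K1 hβ (sq_nonneg (s / α))
  rw [← hr, sqrt_sq (by positivity)] at hK
  have hsobolev := two_mul_tanh_mul_norm_sq_le_integral hf hL0 hper (α * r) y
  have hperiod : Function.Periodic
      (fun x => ‖deriv f x‖ ^ 2 + (α ^ 2 * β + s ^ 2) * ‖f x‖ ^ 2) L := fun x => by
    simp only [hper x, periodic_deriv hper x]
  rw [show α * r * L / 2 = π * r by rw [hL]; field_simp,
    show (α * r) ^ 2 = α ^ 2 * β + s ^ 2 by rw [mul_pow, hr_sq]; field_simp,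
    hperiod.intervalIntegral_add_eq y 0, zero_add, tanh_eq_sinh_div_cosh] at hsobolev
  set I := ∫ x in (0 : ℝ)..L, (‖deriv f x‖ ^ 2 + (α ^ 2 * β + s ^ 2) * ‖f x‖ ^ 2)
  have hI : 0 ≤ I := intervalIntegral.integral_nonneg hL0 fun x _ => by positivity
  have : 0 < sinh (π * r) := sinh_pos_iff.2 (by positivity)
  calc
    2 * s * ‖f y‖ ^ 2
      = s / α * (cosh (π * r) / sinh (π * r)) / r *
          (2 * (α * r) * (sinh (π * r) / cosh (π * r)) * ‖f y‖ ^ 2) := by field_simp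
    _ ≤ s / α * (cosh (π * r) / sinh (π * r)) / r * I := by gcongr
    _ ≤ K1 β * I := by gcongr

theorem integral_inner_deriv_deriv (hf : ContDiff ℝ 2 f) (hper : Function.Periodic f L) (y : ℝ) :
    ∫ x in y..(y + L), ⟪f x, deriv (deriv f) x⟫_ℝ = -∫ x in y..(y + L), ‖deriv f x‖ ^ 2 := by
  have hf' : ContDiff ℝ 1 (deriv f) := hf.deriv'
  have : Continuous (deriv (deriv f)) := hf'.continuous_deriv_one
  have hderiv (x : ℝ) : HasDerivAt (fun x => ⟪f x, deriv f x⟫_ℝ)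
      (⟪f x, deriv (deriv f) x⟫_ℝ + ‖deriv f x‖ ^ 2) x := by
    rw [← real_inner_self_eq_norm_sq]
    exact (hf.differentiable two_ne_zero x).hasDerivAt.inner ℝ
      (hf'.differentiable one_ne_zero x).hasDerivAt
  have hint := intervalIntegral.integral_eq_sub_of_hasDerivAt (a := y) (b := y + L)
    (fun x _ => hderiv x) (Continuous.intervalIntegrable (by fun_prop) _ _)
  rw [hper y, periodic_deriv hper y, sub_self, intervalIntegral.integral_add
    (Continuous.intervalIntegrable (by fun_prop) _ _)
    (Continuous.intervalIntegrable (by fun_prop) _ _)] at hint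
  exact eq_neg_of_add_eq_zero_left hint

end Sobolev

section GramAlgebra

variable {κ : Type*} [Fintype κ]

theorem star_dotProduct_mulVec_eq_trace {R : Type*} [CommSemiring R] [Star R] (c : κ → R)
    (G : Matrix κ κ R) : star c ⬝ᵥ G *ᵥ c = (vecMulVec c (star c) * G).trace := by
  rw [trace_mul_comm, mul_vecMulVec, trace_vecMulVec, dotProduct_comm]

theorem re_star_dotProduct_self (c : κ → ℂ) : (star c ⬝ᵥ c).re = ∑ n, ‖c n‖ ^ 2 := by
  simp [dotProduct, Complex.re_sum, ← Complex.normSq_eq_norm_sq, Complex.normSq_apply]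

theorem sum_star_dotProduct_mulVec_inner {𝕜 E ι : Type*} [RCLike 𝕜] [NormedAddCommGroup E]
    [InnerProductSpace 𝕜 E] [Fintype ι] (b : OrthonormalBasis ι 𝕜 E) (B : Matrix κ κ 𝕜)
    (v : κ → E) :
    ∑ i, star (⟪v ·, b i⟫_𝕜) ⬝ᵥ B *ᵥ (⟪v ·, b i⟫_𝕜) = (B * gram 𝕜 v).trace := by
  have hgram : ∑ i, vecMulVec (⟪v ·, b i⟫_𝕜) (star (⟪v ·, b i⟫_𝕜)) = gram 𝕜 v := by
    ext m n
    simp [Matrix.sum_apply, vecMulVec_apply, b.sum_inner_mul_inner]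
  simp_rw [star_dotProduct_mulVec_eq_trace, ← trace_sum, ← Finset.sum_mul, hgram]
  exact trace_mul_comm _ _

end GramAlgebra

section Gram

variable {E κ : Type*} [NormedAddCommGroup E] [InnerProductSpace ℂ E] {f : κ → ℝ → E}

/-- The Gram matrix in `L²((a, b); E)` of a family of `E`-valued functions. With entries
`∫ ⟪f m, f n⟫` (conjugate-linear in `f m`), it equals `1` exactly for orthonormal families. -/
noncomputable def l2Gram (a b : ℝ) (f : κ → ℝ → E) : Matrix κ κ ℂ :=
  of fun m n => ∫ x in a..b, ⟪f m x, f n x⟫_ℂ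

theorem l2Gram_apply (a b : ℝ) (f : κ → ℝ → E) (m n : κ) :
    l2Gram a b f m n = ∫ x in a..b, ⟪f m x, f n x⟫_ℂ :=
  rfl

theorem re_l2Gram_self {n : κ} (hf : Continuous (f n)) (a b : ℝ) :
    (l2Gram a b f n n).re = ∫ x in a..b, ‖f n x‖ ^ 2 := by
  have hcont : Continuous fun x => ⟪f n x, f n x⟫_ℂ := by fun_prop
  simp_rw [@norm_sq_eq_re_inner ℂ]
  exact (intervalIntegral.intervalIntegral_re (hcont.intervalIntegrable a b)).symm

variable [Fintype κ]

theorem re_trace_l2Gram (hf : ∀ n, Continuous (f n)) (a b : ℝ) :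
    (l2Gram a b f).trace.re = ∑ n, ∫ x in a..b, ‖f n x‖ ^ 2 := by
  simp only [trace, diag_apply, Complex.re_sum, re_l2Gram_self (hf _)]

theorem integral_trace_mul_gram (hf : ∀ n, Continuous (f n)) (B : Matrix κ κ ℂ) (a b : ℝ) :
    ∫ x in a..b, (B * gram ℂ (f · x)).trace = (B * l2Gram a b f).trace := by
  simp only [trace, diag_apply, mul_apply, gram_apply, l2Gram_apply]
  rw [intervalIntegral.integral_finsetSum
    fun _ _ => Continuous.intervalIntegrable (by fun_prop) _ _]
  refine Finset.sum_congr rfl fun m _ => ?_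
  rw [intervalIntegral.integral_finsetSum
    fun _ _ => Continuous.intervalIntegrable (by fun_prop) _ _]
  simp_rw [intervalIntegral.integral_const_mul]

theorem continuous_trace_mul_gram (hf : ∀ n, Continuous (f n)) (B : Matrix κ κ ℂ) :
    Continuous fun x => (B * gram ℂ (f · x)).trace := by
  simp only [trace, diag_apply, mul_apply, gram_apply]
  fun_prop

theorem integral_norm_sq_sum_smul (hf : ∀ n, Continuous (f n)) (c : κ → ℂ) (a b : ℝ) :
    ∫ x in a..b, ‖∑ n, c n • f n x‖ ^ 2 = (star c ⬝ᵥ l2Gram a b f *ᵥ c).re := by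
  rw [star_dotProduct_mulVec_eq_trace, ← integral_trace_mul_gram hf]
  simp_rw [@norm_sq_eq_re_inner ℂ, ← star_dotProduct_gram_mulVec,
    star_dotProduct_mulVec_eq_trace]
  exact intervalIntegral.intervalIntegral_re
    ((continuous_trace_mul_gram hf _).intervalIntegrable a b)

end Gram

section Orthonormal

variable {E κ : Type*} [NormedAddCommGroup E] [InnerProductSpace ℂ E] [Fintype κ] [DecidableEq κ]
  {φ : κ → ℝ → E} {α β L : ℝ}

-- Apply the Sobolev inequality to `x ↦ ∑ n, ⟪φ n y, e⟫ • φ n x`, whose inner product with `e` at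
-- `y` and whose squared `L²` norm are both `∑ n, ‖⟪φ n y, e⟫‖ ^ 2`.
theorem two_mul_mul_sum_norm_inner_sq_le (hα : 0 < α) (hβ : 0 < β) (hL : L = 2 * π / α)
    (hφ : ∀ n, ContDiff ℝ 1 (φ n)) (hper : ∀ n, Function.Periodic (φ n) L)
    (hortho : l2Gram 0 L φ = 1) {e : E} (he : ‖e‖ = 1) (y : ℝ) {s : ℝ} (hs : 0 ≤ s) :
    2 * s * (∑ n, ‖⟪φ n y, e⟫_ℂ‖ ^ 2) ^ 2 ≤
      K1 β * ((star (⟪φ · y, e⟫_ℂ) ⬝ᵥ l2Gram 0 L (fun n => deriv (φ n)) *ᵥ (⟪φ · y, e⟫_ℂ)).re +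
        α ^ 2 * β * ∑ n, ‖⟪φ n y, e⟫_ℂ‖ ^ 2 + s ^ 2 * ∑ n, ‖⟪φ n y, e⟫_ℂ‖ ^ 2) := by
  set c : κ → ℂ := (⟪φ · y, e⟫_ℂ) with hc
  set u := ∑ n, ‖c n‖ ^ 2 with hu
  let f : ℝ → E := fun x => ∑ n, c n • φ n x
  have hφ' (n : κ) : Continuous (deriv (φ n)) := (hφ n).continuous_deriv_one
  have hf : ContDiff ℝ 1 f := by fun_prop
  have hf_per : Function.Periodic f L := fun x => by simp only [f, hper _ x]
  have hderiv : deriv f = fun x => ∑ n, c n • deriv (φ n) x := funext fun x =>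
    (HasDerivAt.fun_sum fun n _ =>
      ((hφ n).differentiable one_ne_zero x).hasDerivAt.const_smul (c n)).deriv
  have hkinetic : ∫ x in (0 : ℝ)..L, ‖deriv f x‖ ^ 2 =
      (star c ⬝ᵥ l2Gram 0 L (fun n => deriv (φ n)) *ᵥ c).re := by
    rw [hderiv, ← integral_norm_sq_sum_smul hφ']
  have hmass : ∫ x in (0 : ℝ)..L, ‖f x‖ ^ 2 = u := by
    rw [integral_norm_sq_sum_smul fun n => (hφ n).continuous, hortho, one_mulVec,
      re_star_dotProduct_self]
  have hinner : ⟪e, f y⟫_ℂ = u := by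
    simp only [f, hc, hu, inner_sum, inner_smul_right, Complex.ofReal_sum]
    exact Finset.sum_congr rfl fun n _ => by
      rw [← inner_conj_symm e, Complex.mul_conj', Complex.ofReal_pow]
  have hpoint : u ^ 2 ≤ ‖f y‖ ^ 2 := by
    have hcs := norm_inner_le_norm (𝕜 := ℂ) e (f y)
    rw [hinner, he, one_mul, Complex.norm_real] at hcs
    exact sq_le_sq' (by linarith [neg_abs_le u, norm_eq_abs u]) ((le_abs_self u).trans hcs)
  have : Continuous (deriv f) := hf.continuous_deriv_one
  let _ : InnerProductSpace ℝ E := InnerProductSpace.complexToReal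
  have hsobolev := two_mul_mul_norm_sq_le_K1_mul_integral hα hβ hL hf hf_per hs y
  rw [intervalIntegral.integral_add (Continuous.intervalIntegrable (by fun_prop) _ _)
    (Continuous.intervalIntegrable (by fun_prop) _ _), intervalIntegral.integral_const_mul,
    hkinetic, hmass, add_mul, ← add_assoc] at hsobolev
  exact le_trans (by gcongr) hsobolev

theorem sum_mul_norm_inner_sq_le {ι : Type*} [Fintype ι] (hα : 0 < α) (hβ : 0 < β)
    (hL : L = 2 * π / α) (hφ : ∀ n, ContDiff ℝ 1 (φ n)) (hper : ∀ n, Function.Periodic (φ n) L)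
    (hortho : l2Gram 0 L φ = 1) (b : OrthonormalBasis ι ℂ E) {v : ι → ℝ} (hv : ∀ i, 0 ≤ v i)
    (y : ℝ) :
    ∑ i, v i * ∑ n, ‖⟪φ n y, b i⟫_ℂ‖ ^ 2 ≤
      2 / (3 * √3) * K1 β * ∑ i, v i ^ (3 / 2 : ℝ) +
        ((l2Gram 0 L (fun n => deriv (φ n)) * gram ℂ (φ · y)).trace.re +
          α ^ 2 * β * ∑ n, ‖φ n y‖ ^ 2) := by
  have hmass : ∑ n, ‖φ n y‖ ^ 2 = ∑ i, ∑ n, ‖⟪φ n y, b i⟫_ℂ‖ ^ 2 := by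
    rw [Finset.sum_comm]
    simp_rw [b.sum_sq_norm_inner_left]
  rw [← sum_star_dotProduct_mulVec_inner b, hmass, Complex.re_sum, Finset.mul_sum, Finset.mul_sum,
    ← Finset.sum_add_distrib, ← Finset.sum_add_distrib]
  exact Finset.sum_le_sum fun i _ => mul_le_rpow_add_of_forall_sq_le (K1_pos hβ) (hv i)
    fun s hs => two_mul_mul_sum_norm_inner_sq_le hα hβ hL hφ hper hortho (b.norm_eq_one i) y hs

end Orthonormal

section Hermitian

variable {ι 𝕜 : Type*} [Fintype ι] [DecidableEq ι] [RCLike 𝕜]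

theorem re_trace_cfc_eq_sum_eigenvalues {A : Matrix ι ι 𝕜} (hA : A.IsHermitian) (f : ℝ → ℝ) :
    RCLike.re (cfc f A).trace = ∑ i, f (hA.eigenvalues i) := by
  rw [hA.cfc_eq, IsHermitian.cfc, Unitary.conjStarAlgAut_apply, trace_mul_cycle,
    Unitary.coe_star_mul_self, one_mul, trace_diagonal]
  simp

open scoped Matrix.Norms.L2Operator in
theorem continuous_sum_eigenvalues {X : Type*} [TopologicalSpace X] {A : X → Matrix ι ι ℂ}
    (hA : Continuous A) (hherm : ∀ x, (A x).IsHermitian) {f : ℝ → ℝ} (hf : Continuous f) :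
    Continuous fun x => ∑ i, f ((hherm x).eigenvalues i) := by
  simp_rw [← re_trace_cfc_eq_sum_eigenvalues]
  have hcfc : Continuous fun x => cfc f (A x) :=
    Continuous.cfc_of_mem_nhdsSet (s := Set.univ) f Filter.univ_mem hA
      (fun x => (hherm x).isSelfAdjoint) hf.continuousOn
  exact Complex.continuous_re.comp hcfc.matrix_trace

theorem re_inner_toEuclideanLin_eq_sum_eigenvalues {A : Matrix ι ι 𝕜} (hA : A.IsHermitian)
    (x : EuclideanSpace 𝕜 ι) :
    RCLike.re ⟪x, toEuclideanLin A x⟫_𝕜 =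
      ∑ i, hA.eigenvalues i * ‖⟪x, hA.eigenvectorBasis i⟫_𝕜‖ ^ 2 := by
  have hsymm := isSymmetric_toEuclideanLin_iff.2 hA
  have heigen (i : ι) : toEuclideanLin A (hA.eigenvectorBasis i) =
      (hA.eigenvalues i : 𝕜) • hA.eigenvectorBasis i := by
    ext j
    simp [toLpLin_apply, hA.mulVec_eigenvectorBasis, RCLike.real_smul_eq_coe_mul]
  rw [← hA.eigenvectorBasis.sum_inner_mul_inner, map_sum]
  refine Finset.sum_congr rfl fun i _ => ?_
  rw [← hsymm, heigen, inner_smul_left, RCLike.conj_ofReal, mul_left_comm, ← inner_conj_symm _ x,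
    RCLike.mul_conj, RCLike.re_ofReal_mul, ← RCLike.ofReal_pow, RCLike.ofReal_re]

end Hermitian

theorem integral_re_inner_of_eq_smul_sub_deriv {E : Type*} [NormedAddCommGroup E]
    [InnerProductSpace ℂ E] {f g : ℝ → E} {L μ : ℝ} (hf : ContDiff ℝ 2 f)
    (hper : Function.Periodic f L) (hg : ∀ x, g x = μ • f x - deriv (deriv f) x) :
    ∫ x in (0 : ℝ)..L, (⟪f x, g x⟫_ℂ).re =
      (∫ x in (0 : ℝ)..L, ‖deriv f x‖ ^ 2) + μ * ∫ x in (0 : ℝ)..L, ‖f x‖ ^ 2 := by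
  let _ : InnerProductSpace ℝ E := InnerProductSpace.complexToReal
  have : Continuous (deriv (deriv f)) := hf.deriv'.continuous_deriv_one
  have hinner (x : ℝ) : (⟪f x, g x⟫_ℂ).re = μ * ‖f x‖ ^ 2 - ⟪f x, deriv (deriv f) x⟫_ℝ := by
    rw [← real_inner_self_eq_norm_sq, ← real_inner_smul_right, ← inner_sub_right, ← hg]
    rfl
  have hparts := integral_inner_deriv_deriv hf hper 0
  rw [zero_add] at hparts
  simp_rw [hinner]
  rw [intervalIntegral.integral_sub (Continuous.intervalIntegrable (by fun_prop) _ _)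
    (Continuous.intervalIntegrable (by fun_prop) _ _), intervalIntegral.integral_const_mul, hparts]
  ring

section LiebThirring

variable {ι κ : Type*} [Fintype ι] [DecidableEq ι] [Fintype κ] [DecidableEq κ] {α β L : ℝ}
  {V : ℝ → Matrix ι ι ℂ} {φ : κ → ℝ → EuclideanSpace ℂ ι}

theorem sum_re_inner_toEuclideanLin_le (hα : 0 < α) (hβ : 0 < β) (hL : L = 2 * π / α)
    (hφ : ∀ n, ContDiff ℝ 1 (φ n)) (hper : ∀ n, Function.Periodic (φ n) L)
    (hortho : l2Gram 0 L φ = 1) {A : Matrix ι ι ℂ} (hA : A.PosSemidef) (y : ℝ) :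
    ∑ n, (⟪φ n y, toEuclideanLin A (φ n y)⟫_ℂ).re ≤
      2 / (3 * √3) * K1 β * ∑ i, hA.1.eigenvalues i ^ (3 / 2 : ℝ) +
        ((l2Gram 0 L (fun n => deriv (φ n)) * gram ℂ (φ · y)).trace.re +
          α ^ 2 * β * ∑ n, ‖φ n y‖ ^ 2) := by
  calc
    ∑ n, (⟪φ n y, toEuclideanLin A (φ n y)⟫_ℂ).re
      = ∑ n, ∑ i, hA.1.eigenvalues i * ‖⟪φ n y, hA.1.eigenvectorBasis i⟫_ℂ‖ ^ 2 :=
        Finset.sum_congr rfl fun n _ => re_inner_toEuclideanLin_eq_sum_eigenvalues hA.1 (φ n y)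
    _ = ∑ i, hA.1.eigenvalues i * ∑ n, ‖⟪φ n y, hA.1.eigenvectorBasis i⟫_ℂ‖ ^ 2 := by
        rw [Finset.sum_comm]
        simp_rw [Finset.mul_sum]
    _ ≤ _ := sum_mul_norm_inner_sq_le hα hβ hL hφ hper hortho _ hA.eigenvalues_nonneg y

theorem sum_integral_re_inner_toEuclideanLin_le (hα : 0 < α) (hβ : 0 < β) (hL : L = 2 * π / α)
    (hVc : Continuous V) (hV : ∀ x, (V x).PosSemidef) (hφ : ∀ n, ContDiff ℝ 1 (φ n))
    (hper : ∀ n, Function.Periodic (φ n) L) (hortho : l2Gram 0 L φ = 1) :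
    ∑ n, ∫ x in (0 : ℝ)..L, (⟪φ n x, toEuclideanLin (V x) (φ n x)⟫_ℂ).re ≤
      2 / (3 * √3) * K1 β * (∫ x in (0 : ℝ)..L, ∑ i, (hV x).1.eigenvalues i ^ (3 / 2 : ℝ)) +
        ∑ n, ((∫ x in (0 : ℝ)..L, ‖deriv (φ n) x‖ ^ 2) +
          α ^ 2 * β * ∫ x in (0 : ℝ)..L, ‖φ n x‖ ^ 2) := by
  have hφc (n : κ) : Continuous (φ n) := (hφ n).continuous
  let B := l2Gram 0 L fun n => deriv (φ n)
  have hpotential (n : κ) :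
      Continuous fun x => (⟪φ n x, toEuclideanLin (V x) (φ n x)⟫_ℂ).re := by
    simp only [toLpLin_apply]
    fun_prop
  have heigenvalues : Continuous fun x => ∑ i, (hV x).1.eigenvalues i ^ (3 / 2 : ℝ) :=
    continuous_sum_eigenvalues hVc (fun x => (hV x).1) (continuous_rpow_const (by norm_num))
  have hgram : Continuous fun y => (B * gram ℂ (φ · y)).trace := continuous_trace_mul_gram hφc B
  have hkinetic : ∫ y in (0 : ℝ)..L, (B * gram ℂ (φ · y)).trace.re =
      ∑ n, ∫ x in (0 : ℝ)..L, ‖deriv (φ n) x‖ ^ 2 := by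
    rw [← re_trace_l2Gram fun n => (hφ n).continuous_deriv_one]
    refine (intervalIntegral.intervalIntegral_re (hgram.intervalIntegrable 0 L)).trans ?_
    rw [integral_trace_mul_gram hφc, hortho, mul_one]
    rfl
  have hmass : ∫ y in (0 : ℝ)..L, ∑ n, ‖φ n y‖ ^ 2 = ∑ n, ∫ x in (0 : ℝ)..L, ‖φ n x‖ ^ 2 :=
    intervalIntegral.integral_finsetSum
      fun n _ => ((hφc n).norm.pow 2).intervalIntegrable 0 L
  have hint := intervalIntegral.integral_mono_on (μ := volume) (by rw [hL]; positivity)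
    (Continuous.intervalIntegrable (by fun_prop) 0 L)
    (Continuous.intervalIntegrable (by fun_prop) 0 L)
    fun y _ => sum_re_inner_toEuclideanLin_le hα hβ hL hφ hper hortho (hV y) y
  rw [intervalIntegral.integral_finsetSum fun n _ => (hpotential n).intervalIntegrable 0 L,
    intervalIntegral.integral_add (Continuous.intervalIntegrable (by fun_prop) 0 L)
      (Continuous.intervalIntegrable (by fun_prop) 0 L),
    intervalIntegral.integral_add (Continuous.intervalIntegrable (by fun_prop) 0 L)
      (Continuous.intervalIntegrable (by fun_prop) 0 L),
    intervalIntegral.integral_const_mul, intervalIntegral.integral_const_mul, hkinetic,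
    hmass] at hint
  rwa [Finset.sum_add_distrib, ← Finset.mul_sum]

theorem sum_le_integral_sum_eigenvalues_rpow (hα : 0 < α) (hβ : 0 < β) (hL : L = 2 * π / α)
    (hVc : Continuous V) (hV : ∀ x, (V x).PosSemidef) (hφ : ∀ n, ContDiff ℝ 2 (φ n))
    (hper : ∀ n, Function.Periodic (φ n) L) (hortho : l2Gram 0 L φ = 1) {lam : κ → ℝ}
    (heig : ∀ n x, toEuclideanLin (V x) (φ n x) =
      (α ^ 2 * β + lam n) • φ n x - deriv (deriv (φ n)) x) :
    ∑ n, lam n ≤ 2 / (3 * √3) * K1 β *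
      ∫ x in (0 : ℝ)..L, ∑ i, (hV x).1.eigenvalues i ^ (3 / 2 : ℝ) := by
  have hmass (n : κ) : ∫ x in (0 : ℝ)..L, ‖φ n x‖ ^ 2 = 1 := by
    rw [← re_l2Gram_self (hφ n).continuous, hortho, one_apply_eq, Complex.one_re]
  have hbound := sum_integral_re_inner_toEuclideanLin_le hα hβ hL hVc hV
    (fun n => (hφ n).of_le one_le_two) hper hortho
  simp_rw [fun n => integral_re_inner_of_eq_smul_sub_deriv (hφ n) (hper n) (heig n), hmass,
    mul_one, ← add_assoc, Finset.sum_add_distrib] at hbound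
  linarith

end LiebThirring

theorem deriv_toLp {𝕜 ι : Type*} [NontriviallyNormedField 𝕜] [Finite ι] {F : ι → Type*}
    [∀ i, NormedAddCommGroup (F i)] [∀ i, NormedSpace 𝕜 (F i)] (p : ENNReal) [Fact (1 ≤ p)]
    {f : 𝕜 → ∀ i, F i} (hf : Differentiable 𝕜 f) :
    deriv (fun x => WithLp.toLp p (f x)) = fun x => WithLp.toLp p (deriv f x) := by
  have := Fintype.ofFinite ι
  exact funext fun x =>
    ((PiLp.hasFDerivAt_toLp (𝕜 := 𝕜) p (f x)).comp_hasDerivAt x (hf x).hasDerivAt).deriv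

theorem stmt_13_general {ι κ : Type*} [Fintype ι] [DecidableEq ι] [Fintype κ] [DecidableEq κ]
    {α β L : ℝ} (hα : 0 < α) (hβ : 0 < β) (hL : L = 2 * π / α)
    {V : ℝ → Matrix ι ι ℂ} (hVc : Continuous V) (hV : ∀ x, (V x).PosSemidef)
    {φ : κ → ℝ → ι → ℂ} (hφ : ∀ n, ContDiff ℝ 2 (φ n)) (hper : ∀ n, Function.Periodic (φ n) L)
    (hortho : ∀ n m, (∫ x in (0 : ℝ)..L, ∑ j, φ n x j * (starRingEnd ℂ) (φ m x j)) =
      if n = m then 1 else 0)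
    {lam : κ → ℝ}
    (heig : ∀ n x, -(deriv (deriv (φ n)) x) + (α ^ 2 * β) • φ n x - V x *ᵥ φ n x =
      (-(lam n)) • φ n x) :
    ∑ n, lam n ≤ 2 / (3 * √3) * K1 β *
      ∫ x in (0 : ℝ)..L, ∑ i, (hV x).1.eigenvalues i ^ (3 / 2 : ℝ) := by
  let ψ : κ → ℝ → EuclideanSpace ℂ ι := fun n x => WithLp.toLp 2 (φ n x)
  have hψ (n : κ) : ContDiff ℝ 2 (ψ n) := PiLp.contDiff_toLp.comp (hφ n)
  have hψ_ortho : l2Gram 0 L ψ = 1 := by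
    ext m n
    calc
      l2Gram 0 L ψ m n = if n = m then 1 else 0 := hortho n m
      _ = (1 : Matrix κ κ ℂ) m n := by simp only [one_apply, eq_comm]
  have hψ_deriv (n : κ) : deriv (deriv (ψ n)) = fun x => WithLp.toLp 2 (deriv (deriv (φ n)) x) := by
    rw [deriv_toLp 2 ((hφ n).differentiable two_ne_zero),
      deriv_toLp 2 ((hφ n).deriv'.differentiable one_ne_zero)]
  refine sum_le_integral_sum_eigenvalues_rpow hα hβ hL hVc hV hψ
    (fun n x => congrArg (WithLp.toLp 2) (hper n x)) hψ_ortho fun n x => ?_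
  have hpotential : V x *ᵥ φ n x = (α ^ 2 * β + lam n) • φ n x - deriv (deriv (φ n)) x := by
    rw [add_smul, ← sub_eq_zero, ← neg_eq_zero, ← sub_eq_zero.2 (heig n x)]
    module
  rw [hψ_deriv, toLpLin_apply, hpotential]
  rfl

theorem stmt_13 (α β : ℝ) (hα : 0 < α) (hβ : 0 < β) (L : ℝ) (hL : L = 2 * π / α)
    (M N : ℕ) (hM : 1 ≤ M)
    (V : ℝ → Matrix (Fin M) (Fin M) ℂ) (hVc : Continuous V)
    (hVper : Function.Periodic V L) (hV : ∀ x, (V x).PosSemidef)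
    (φ : Fin N → ℝ → Fin M → ℂ) (hφ : ∀ n, ContDiff ℝ 2 (φ n))
    (hper : ∀ n, Function.Periodic (φ n) L)
    (hortho : ∀ n m, (∫ x in (0:ℝ)..L, ∑ j, φ n x j * (starRingEnd ℂ) (φ m x j)) =
      if n = m then 1 else 0)
    (lam : Fin N → ℝ) (hlam : ∀ n, 0 < lam n)
    (heig : ∀ n x, -(deriv (deriv (φ n)) x) + (α ^ 2 * β) • φ n x - (V x).mulVec (φ n x) =
      (-(lam n)) • φ n x) :
    ∑ n, lam n ≤ (2 / (3 * Real.sqrt 3)) * K1 β *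
      ∫ x in (0:ℝ)..L, ∑ i, (hV x).1.eigenvalues i ^ (3 / 2 : ℝ) :=
  stmt_13_general hα hβ hL hVc hV hφ hper hortho heig
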